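/- arXiv:1812.04294 — 3 statements merged into one kernel-verified Lean document; each statement's English description precedes it below -/
import Mathlib

section
/- Let s be an even positive integer, n an odd integer with n > 3s, and let α_1, ..., α_n ∈ ℂ be the roots, counted with multiplicity, of F(X) = X^n + X^(n-s) + X^(n-2s) + X^(n-3s) + 1 ∈ ℤ[X]. Then T_{n-s} = T_{n-3s}, where T_m := Σ_{1 ≤ i < j ≤ n} (α_i α_j)^m. In particular T_{n-s} + T_{n-3s} is an even integer. -/
open Polynomial Finset

open scoped PowerSeries

/-!
The reversed polynomial `∏ (1 - α_i X)` is `g + X ^ n` with `g = (1 - X ^ (4 * s)) / (1 - X ^ s)`,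
so the generating function `P` of the power sums satisfies `P * (g + X ^ n) = n * g - X * g'`.
Dividing by `g`, whose only exponents are multiples of `s`, gives
`P = D - X ^ n * (D / g) + O(X ^ (2 * n))` with `D = n - X * g' / g`. As `s` is even and `n` is odd,
`P` and `D` agree below degree `n` and, in even degrees, below degree `2 * n`. Thus for `m < n` odd,
the `m`-th power sum vanishes and the `2 * m`-th one is `-s` or `0`, according to whether
`s ∣ 2 * m`. As `2 * T_m` is the square of the former minus the latter, `T_m` is `s / 2` or `0`,
depending only on `m` modulo `s`.
-/

section EulerDerivation

/-- The Euler operator `X * d/dX` on power series, which multiplies the `k`-th coefficient by `k`.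
It replaces `d/dX` in logarithmic derivatives so that no exponent is shifted. -/
noncomputable def eulerDerivation (R : Type*) [CommRing R] : Derivation R R⟦X⟧ R⟦X⟧ :=
  (PowerSeries.X : R⟦X⟧) • d⁄dX R

variable {R : Type*} [CommRing R]

lemma coeff_eulerDerivation (φ : R⟦X⟧) (k : ℕ) :
    PowerSeries.coeff k (eulerDerivation R φ) = k • PowerSeries.coeff k φ := by
  cases k with
  | zero => simp [eulerDerivation]
  | succ k =>
    simp only [eulerDerivation, Derivation.smul_apply, smul_eq_mul]
    rw [PowerSeries.coeff_succ_X_mul, PowerSeries.coeff_derivative]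
    simp [mul_comm]

lemma eulerDerivation_X_pow (k : ℕ) :
    eulerDerivation R (PowerSeries.X ^ k) = k • PowerSeries.X ^ k := by
  ext m
  rw [coeff_eulerDerivation, map_nsmul, PowerSeries.coeff_X_pow]
  split_ifs with h
  · rw [h]
  · simp

lemma eulerDerivation_expand {s : ℕ} (hs : s ≠ 0) (φ : R⟦X⟧) :
    eulerDerivation R (PowerSeries.expand s hs φ) =
      PowerSeries.expand s hs (s • eulerDerivation R φ) := by
  ext k
  rw [coeff_eulerDerivation, PowerSeries.coeff_expand, PowerSeries.coeff_expand]
  split_ifs with hk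
  · rw [map_nsmul, coeff_eulerDerivation, smul_smul, Nat.mul_div_cancel' hk]
  · rw [smul_zero]

end EulerDerivation

section GeomSum

variable {R : Type*} [CommRing R] {r : ℕ} (hr : r ≠ 0)

lemma expand_mk_one_mul_one_sub_X_pow :
    PowerSeries.expand r hr (PowerSeries.mk 1) * (1 - PowerSeries.X ^ r) = (1 : R⟦X⟧) := by
  have h := congrArg (PowerSeries.expand r hr) (PowerSeries.mk_one_mul_one_sub_eq_one R)
  simpa using h

lemma geom_sum_X_mul_inverse :
    (∑ j ∈ range r, (PowerSeries.X : R⟦X⟧) ^ j) *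
      ((1 - PowerSeries.X) * PowerSeries.expand r hr (PowerSeries.mk 1)) = 1 := by
  rw [← mul_assoc, geom_sum_mul_neg, mul_comm, expand_mk_one_mul_one_sub_X_pow]

lemma eulerDerivation_geom_sum_X_mul_inverse :
    eulerDerivation R (∑ j ∈ range r, (PowerSeries.X : R⟦X⟧) ^ j) *
        ((1 - PowerSeries.X) * PowerSeries.expand r hr (PowerSeries.mk 1)) =
      (PowerSeries.mk 1 - 1) - r • (PowerSeries.expand r hr (PowerSeries.mk 1) - 1) := by
  set φ : R⟦X⟧ := ∑ j ∈ range r, PowerSeries.X ^ j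
  set E : R⟦X⟧ := PowerSeries.expand r hr (PowerSeries.mk 1)
  have hφ : φ * (1 - PowerSeries.X) = 1 - PowerSeries.X ^ r := geom_sum_mul_neg ..
  have hE : E * (1 - PowerSeries.X ^ r) = 1 := expand_mk_one_mul_one_sub_X_pow hr
  have hG : PowerSeries.mk 1 * (1 - PowerSeries.X) = (1 : R⟦X⟧) :=
    PowerSeries.mk_one_mul_one_sub_eq_one R
  have hφE : φ * E = PowerSeries.mk 1 := by
    linear_combination (-φ * E) * hG + PowerSeries.mk 1 * E * hφ + PowerSeries.mk 1 * hE
  have hX : eulerDerivation R PowerSeries.X = PowerSeries.X := by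
    simpa using eulerDerivation_X_pow (R := R) 1
  have hderiv := congrArg (eulerDerivation R) hφ
  simp only [Derivation.leibniz, map_sub, Derivation.map_one_eq_zero, eulerDerivation_X_pow, hX,
    smul_eq_mul, nsmul_eq_mul] at hderiv ⊢
  linear_combination E * hderiv + PowerSeries.X * hφE - hG + r * hE

end GeomSum

section PowerSums

variable {ι R : Type*} [CommRing R]

/-- The generating function `∑ k, p_k X ^ k` of the power sums `p_k` of the family `α` over `S`,
including the term `p_0 = #S`. -/
noncomputable def powerSumSeries (S : Finset ι) (α : ι → R) : R⟦X⟧ :=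
  PowerSeries.mk fun k => ∑ i ∈ S, α i ^ k

lemma mk_pow_mul_one_sub_C_mul_X (a : R) :
    PowerSeries.mk (a ^ ·) * (1 - PowerSeries.C a * PowerSeries.X) = 1 := by
  have h := congrArg (PowerSeries.rescale a) (PowerSeries.mk_one_mul_one_sub_eq_one R)
  simpa [PowerSeries.rescale_mk] using h

lemma powerSumSeries_mul_prod (S : Finset ι) (α : ι → R) :
    powerSumSeries S α * ∏ i ∈ S, (1 - PowerSeries.C (α i) * PowerSeries.X) =
      #S • ∏ i ∈ S, (1 - PowerSeries.C (α i) * PowerSeries.X) -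
        eulerDerivation R (∏ i ∈ S, (1 - PowerSeries.C (α i) * PowerSeries.X)) := by
  classical
  induction S using Finset.induction_on with
  | empty => ext; simp [powerSumSeries]
  | insert i S hi ih =>
    have hsum : powerSumSeries (insert i S) α =
        PowerSeries.mk (α i ^ ·) + powerSumSeries S α := by
      ext k
      simp [powerSumSeries, hi]
    have hderiv : eulerDerivation R (1 - PowerSeries.C (α i) * PowerSeries.X) =
        -(PowerSeries.C (α i) * PowerSeries.X) := by
      simp [eulerDerivation, Derivation.leibniz, mul_comm]
    rw [hsum, prod_insert hi, Derivation.leibniz, hderiv, card_insert_of_notMem hi]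
    simp only [smul_eq_mul, nsmul_eq_mul] at ih ⊢
    push_cast
    linear_combination
      (∏ i ∈ S, (1 - PowerSeries.C (α i) * PowerSeries.X)) * mk_pow_mul_one_sub_C_mul_X (α i) +
        (1 - PowerSeries.C (α i) * PowerSeries.X) * ih

lemma reflect_prod_X_sub_C (S : Finset ι) (α : ι → R) :
    reflect #S (∏ i ∈ S, (X - C (α i))) = ∏ i ∈ S, (1 - C (α i) * X) := by
  classical
  induction S using Finset.induction_on with
  | empty => simp
  | insert i S hi ih =>
    have hdeg : (∏ j ∈ S, (X - C (α j))).natDegree ≤ #S := by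
      nontriviality R
      exact (natDegree_finsetProd_X_sub_C_eq_card S α).le
    rw [prod_insert hi, prod_insert hi, card_insert_of_notMem hi, add_comm #S,
      reflect_mul _ _ (natDegree_X_sub_C_le _) hdeg, ih]
    simp [reflect_sub]

lemma coeff_X_pow_mul_expand_eq_zero {s n k : ℕ} (hs : s ≠ 0) (φ : R⟦X⟧)
    (hk : n ≤ k → ¬ s ∣ k - n) :
    PowerSeries.coeff k (PowerSeries.X ^ n * PowerSeries.expand s hs φ) = 0 := by
  rw [PowerSeries.coeff_X_pow_mul']
  split_ifs with h
  · exact PowerSeries.coeff_expand_of_not_dvd s hs φ (hk h)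
  · rfl

variable {S : Finset ι} {α : ι → R} {s : ℕ}

lemma coeff_powerSumSeries_of_prod_eq_expand_add_X_pow (hs : s ≠ 0) {φ ψ : R⟦X⟧} (hφψ : φ * ψ = 1)
    (hprod : ∏ i ∈ S, (1 - PowerSeries.C (α i) * PowerSeries.X) =
      PowerSeries.expand s hs φ + PowerSeries.X ^ #S)
    {k : ℕ} (hk : k < 2 * #S) (hks : #S ≤ k → ¬ s ∣ k - #S) :
    PowerSeries.coeff k (powerSumSeries S α) =
      PowerSeries.coeff k (PowerSeries.expand s hs (#S • 1 - s • (eulerDerivation R φ * ψ))) := by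
  set n := #S
  set P := powerSumSeries S α
  set D : R⟦X⟧ := n • 1 - s • (eulerDerivation R φ * ψ)
  set E := PowerSeries.expand (R := R) s hs
  have hmul : P * (E φ + PowerSeries.X ^ n) = n • E φ - E (s • eulerDerivation R φ) := by
    have h := powerSumSeries_mul_prod S α
    rw [hprod, map_add, eulerDerivation_expand, eulerDerivation_X_pow] at h
    linear_combination h
  have hinv : E φ * E ψ = 1 := by rw [← map_mul, hφψ, map_one]
  have hD : E D = n • 1 - E (s • eulerDerivation R φ) * E ψ := by
    simp only [D, map_sub, map_nsmul, map_mul, map_one, smul_mul_assoc]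
  have hPD : P = E D - PowerSeries.X ^ n * (E ψ * P) := by
    simp only [nsmul_eq_mul] at hmul hD
    linear_combination E ψ * hmul - (P - n) * hinv - hD
  have hP : P = E D - PowerSeries.X ^ n * E (ψ * D) +
      PowerSeries.X ^ (2 * n) * (E ψ ^ 2 * P) := by
    rw [map_mul]
    linear_combination (1 - PowerSeries.X ^ n * E ψ) * hPD
  rw [hP, map_add, map_sub, coeff_X_pow_mul_expand_eq_zero hs _ hks,
    PowerSeries.coeff_X_pow_mul', if_neg hk.not_ge, sub_zero, add_zero]

lemma sum_pow_of_prod_eq_geom_sum_add_X_pow {r : ℕ} (hr : r ≠ 0) (hs : s ≠ 0)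
    (hprod : ∏ i ∈ S, (1 - C (α i) * X) = ∑ j ∈ range r, X ^ (j * s) + X ^ #S)
    {k : ℕ} (hk0 : k ≠ 0) (hk : k < 2 * #S) (hks : #S ≤ k → ¬ s ∣ k - #S) :
    ∑ i ∈ S, α i ^ k =
      (if r * s ∣ k then ((r * s : ℕ) : R) else 0) - if s ∣ k then (s : R) else 0 := by
  have hprod' : ∏ i ∈ S, (1 - PowerSeries.C (α i) * PowerSeries.X) =
      PowerSeries.expand s hs (∑ j ∈ range r, PowerSeries.X ^ j) + PowerSeries.X ^ #S := by
    have h := congrArg Polynomial.coeToPowerSeries.ringHom hprod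
    simp only [map_add, map_sum, map_prod] at h
    simpa [pow_mul'] using h
  have h := coeff_powerSumSeries_of_prod_eq_expand_add_X_pow hs (geom_sum_X_mul_inverse hr)
    hprod' hk hks
  rw [eulerDerivation_geom_sum_X_mul_inverse, PowerSeries.coeff_expand, powerSumSeries,
    PowerSeries.coeff_mk] at h
  rw [h]
  by_cases hsk : s ∣ k
  · obtain ⟨m, rfl⟩ := hsk
    have hm : m ≠ 0 := right_ne_zero_of_mul hk0
    have hdiv : r * s ∣ s * m ↔ r ∣ m := by rw [mul_comm r, mul_dvd_mul_iff_left hs]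
    simp only [dvd_mul_right, if_true, Nat.mul_div_cancel_left m (Nat.pos_of_ne_zero hs), hdiv,
      map_sub, map_nsmul, PowerSeries.coeff_one, hm, if_false, PowerSeries.coeff_mk,
      PowerSeries.coeff_expand, Pi.one_apply]
    split_ifs <;> push_cast [nsmul_eq_mul] <;> ring
  · have hrsk : ¬ r * s ∣ k := fun h => hsk (dvd_of_mul_left_dvd h)
    simp [hsk, hrsk]

lemma prod_one_sub_C_mul_X_of_prod_X_sub_C_eq {r : ℕ} (hrs : (r - 1) * s ≤ #S)
    (hroots : ∑ j ∈ range r, X ^ (#S - j * s) + 1 = ∏ i ∈ S, (X - C (α i))) :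
    ∏ i ∈ S, (1 - C (α i) * X) = ∑ j ∈ range r, X ^ (j * s) + X ^ #S := by
  have hreflect_sum (f : ℕ → R[X]) :
      reflect #S (∑ j ∈ range r, f j) = ∑ j ∈ range r, reflect #S (f j) := by
    ext
    simp [coeff_reflect]
  rw [← reflect_prod_X_sub_C, ← hroots, reflect_add, reflect_one, hreflect_sum]
  congr 1
  refine sum_congr rfl fun j hj => ?_
  have hjs : j * s ≤ #S :=
    (Nat.mul_le_mul_right s (Nat.le_sub_one_of_lt (mem_range.1 hj))).trans hrs
  rw [reflect_monomial, revAt_le (Nat.sub_le _ _), Nat.sub_sub_self hjs]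

end PowerSums

section PairPowerSum

variable {ι R : Type*} [CommRing R] [Fintype ι] [LinearOrder ι] [LocallyFiniteOrderTop ι]

lemma sum_sq_eq [LocallyFiniteOrderBot ι] (b : ι → R) :
    (∑ i, b i) ^ 2 = ∑ i, b i ^ 2 + 2 * ∑ i, ∑ j ∈ Ioi i, b i * b j := by
  have hoff := sum_sum_Ioi_add_eq_sum_sum_off_diag fun i j => b i * b j
  calc (∑ i, b i) ^ 2 = ∑ i, (b i * b i + ∑ j ∈ {i}ᶜ, b j * b i) := by
        simp_rw [sq, sum_mul_sum]
        exact sum_congr rfl fun i _ => by simp_rw [Fintype.sum_eq_add_sum_compl i, mul_comm]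
    _ = ∑ i, b i ^ 2 + 2 * ∑ i, ∑ j ∈ Ioi i, b i * b j := by
        rw [sum_add_distrib, ← hoff]
        simp only [mul_comm, mul_sum, sq, mul_two]

/-- The sum `T_m` of the `m`-th powers of the products of pairs of entries of `α`, each unordered
pair of distinct indices being counted once. -/
def pairPowerSum (α : ι → R) (m : ℕ) : R :=
  ∑ i, ∑ j ∈ Ioi i, (α i * α j) ^ m

lemma two_mul_pairPowerSum [LocallyFiniteOrderBot ι] (α : ι → R) (m : ℕ) :
    2 * pairPowerSum α m = (∑ i, α i ^ m) ^ 2 - ∑ i, α i ^ (2 * m) := by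
  simp only [sum_sq_eq, pairPowerSum, mul_pow, mul_comm 2 m, pow_mul, add_sub_cancel_left]

end PairPowerSum

section GapPolynomial

variable {R : Type*} [CommRing R] {r s n : ℕ} {α : Fin n → R}

lemma two_mul_pairPowerSum_of_odd (hr0 : r ≠ 0) (hr : Even r) (hs0 : s ≠ 0) (hs : Even s)
    (hodd : Odd n) (hrs : (r - 1) * s < n)
    (hroots : ∑ j ∈ range r, X ^ (n - j * s) + 1 = ∏ i, (X - C (α i)))
    {m : ℕ} (hm : Odd m) (hmn : m < n) :
    2 * pairPowerSum α m = if s ∣ 2 * m then (s : R) else 0 := by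
  have hprod := prod_one_sub_C_mul_X_of_prod_X_sub_C_eq (S := univ) (α := α) (r := r) (s := s)
    (by simpa using hrs.le) (by simpa using hroots)
  have hs_odd {k : ℕ} (hk : Odd k) : ¬ s ∣ k := fun h =>
    Nat.not_even_iff_odd.2 hk (hs.trans_dvd h)
  have hrs_two_mul : ¬ r * s ∣ 2 * m := fun h =>
    have h4 : 2 * 2 ∣ 2 * m := (mul_dvd_mul hr.two_dvd hs.two_dvd).trans h
    Nat.not_even_iff_odd.2 hm (even_iff_two_dvd.2 (Nat.dvd_of_mul_dvd_mul_left two_pos h4))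
  have hm0 : m ≠ 0 := hm.pos.ne'
  have hsum_odd : ∑ i, α i ^ m = 0 := by
    rw [sum_pow_of_prod_eq_geom_sum_add_X_pow hr0 hs0 hprod hm0
        (by rw [card_fin]; omega) (by rw [card_fin]; omega),
      if_neg fun h => hs_odd hm (dvd_of_mul_left_dvd h), if_neg (hs_odd hm), sub_zero]
  have hsum_even : ∑ i, α i ^ (2 * m) = -if s ∣ 2 * m then (s : R) else 0 := by
    rw [sum_pow_of_prod_eq_geom_sum_add_X_pow hr0 hs0 hprod (mul_ne_zero two_ne_zero hm0)
        (by rw [card_fin]; omega)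
        (by rw [card_fin]; exact fun h => hs_odd (Nat.Even.sub_odd h (even_two_mul m) hodd)),
      if_neg hrs_two_mul, zero_sub]
  rw [two_mul_pairPowerSum, hsum_odd, hsum_even]
  ring

theorem T_eq_and_sum_even_general (h2 : IsLeftRegular (2 : R))
    (hr0 : r ≠ 0) (hr : Even r) (hs0 : s ≠ 0) (hs : Even s)
    (hodd : Odd n) (hrs : (r - 1) * s < n)
    (hroots : ∑ j ∈ range r, X ^ (n - j * s) + 1 = ∏ i, (X - C (α i)))
    {m m' : ℕ} (hm : Odd m) (hmn : m < n) (hmn' : m' < n) (hmm' : m ≡ m' [MOD s]) :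
    pairPowerSum α m = pairPowerSum α m' ∧
      ∃ k : ℤ, pairPowerSum α m + pairPowerSum α m' = (2 * k : ℤ) := by
  have hm' : Odd m' := by
    rw [Nat.odd_iff, ← Nat.odd_iff.1 hm]
    exact (hmm'.of_dvd hs.two_dvd).symm
  have hdvd : s ∣ 2 * m ↔ s ∣ 2 * m' := (hmm'.mul_left 2).dvd_iff dvd_rfl
  have hT := two_mul_pairPowerSum_of_odd hr0 hr hs0 hs hodd hrs hroots hm hmn
  have hT' := two_mul_pairPowerSum_of_odd hr0 hr hs0 hs hodd hrs hroots hm' hmn'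
  have heq : pairPowerSum α m = pairPowerSum α m' := h2 (by simp only [hT, hT', hdvd])
  refine ⟨heq, if s ∣ 2 * m then s / 2 else 0, ?_⟩
  rw [← heq, ← two_mul, hT]
  split_ifs
  · rw [Int.mul_ediv_cancel' (by exact_mod_cast hs.two_dvd), Int.cast_natCast]
  · simp

end GapPolynomial

theorem T_eq_and_sum_even (s n : ℕ) (hs : Even s) (hs0 : 0 < s)
    (hodd : Odd n) (hn : 3 * s < n) (α : Fin n → ℂ)
    (hroots : (X ^ n + X ^ (n - s) + X ^ (n - 2 * s) + X ^ (n - 3 * s) + 1 :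
        Polynomial ℤ).map (Int.castRingHom ℂ) =
      ∏ i : Fin n, (X - C (α i))) :
    (∑ i : Fin n, ∑ j ∈ Finset.Ioi i, (α i * α j) ^ (n - s)) =
      (∑ i : Fin n, ∑ j ∈ Finset.Ioi i, (α i * α j) ^ (n - 3 * s)) ∧
    ∃ k : ℤ,
      (∑ i : Fin n, ∑ j ∈ Finset.Ioi i, (α i * α j) ^ (n - s)) +
        (∑ i : Fin n, ∑ j ∈ Finset.Ioi i, (α i * α j) ^ (n - 3 * s)) = (2 * k : ℤ) := by
  have hmod : n - s ≡ n - 3 * s [MOD s] := by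
    rw [Nat.ModEq.comm, Nat.modEq_iff_dvd' (by omega)]
    exact ⟨2, by omega⟩
  exact T_eq_and_sum_even_general (r := 4) (IsRegular.of_ne_zero two_ne_zero).left four_ne_zero
    (by decide) hs0.ne' hs hodd hn (by simpa [sum_range_succ] using hroots)
    (Nat.Odd.sub_even (by omega) hodd hs) (by omega) (by omega) hmod
end

section
/- Let s be an even positive integer, n an odd integer with n > 3s, and let α_1, ..., α_n ∈ ℂ be the roots, counted with multiplicity, of F(X) = X^n + X^(n-s) + X^(n-2s) + X^(n-3s) + 1 ∈ ℤ[X]. Set H(X) := n·F(X) − X·F'(X) = s·X^(n-s) + 2s·X^(n-2s) + 3s·X^(n-3s) + n. Then the integer ∏_{i=1}^n H(α_i) satisfies ∏_{i=1}^n H(α_i) ≡ n + s·S_{n-s} + 2s·S_{n-2s} + 3s·S_{n-3s} + n·s^2·T_{n-s} + n·s^2·T_{n-3s} + 3n·s^2·(S_{n-s}·S_{n-3s} − S_{2n-4s}) (mod 8), where S_m := Σ_{i=1}^n α_i^m and T_m := Σ_{1 ≤ i < j ≤ n} (α_i α_j)^m. -/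
open Polynomial Finset

/-!
The values of `n * F - X * derivative F` at the roots are `n + s * β i`, where `β i` is the sum of
`α i ^ (n - s)`, `2 * α i ^ (n - 2 * s)` and `3 * α i ^ (n - 3 * s)`. As `n ^ 2 ≡ 1` modulo `8`,
each of them is congruent to `n * (1 + n * s * β i)`. Since `8 ∣ s ^ 3`, the product over `i` modulo
`8` only sees the first two elementary symmetric functions of the `β i`, and since `8 ∣ 2 * s ^ 2`,
the second one only matters modulo `2`. This gives a congruence modulo `8` between polynomials in
variables `α i`.

To pass from polynomials to integers, write a symmetric polynomial as a polynomial in the elementary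
symmetric ones, whose values at the roots are, up to sign, the coefficients of `F`. Evaluation at
the roots thus becomes a ring homomorphism from the symmetric polynomials to `ℤ`. Symmetric
polynomials which are congruent modulo `8` differ by `8` times a *symmetric* polynomial, so such a
homomorphism sends them to congruent integers.
-/

section PairSum

/-- The second elementary symmetric function of `f 0, ..., f (n - 1)`, written as a sum over
increasing pairs of indices. -/
def pairSum {A : Type*} [CommSemiring A] {n : ℕ} (f : Fin n → A) : A :=
  ∑ i, ∑ j ∈ Ioi i, f i * f j

theorem pairSum_succ {A : Type*} [CommSemiring A] {n : ℕ} (f : Fin (n + 1) → A) :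
    pairSum f = f 0 * ∑ i : Fin n, f i.succ + pairSum fun i : Fin n ↦ f i.succ := by
  simp only [pairSum, Fin.sum_univ_succ, Fin.sum_Ioi_zero, Fin.sum_Ioi_succ, mul_sum]

theorem map_pairSum {A B : Type*} [CommSemiring A] [CommSemiring B] (g : A →+* B) {n : ℕ}
    (f : Fin n → A) : g (pairSum f) = pairSum fun i ↦ g (f i) := by
  simp only [pairSum, map_sum, map_mul]

theorem pairSum_const_mul {A : Type*} [CommSemiring A] {n : ℕ} (k : A) (f : Fin n → A) :
    pairSum (fun i ↦ k * f i) = k ^ 2 * pairSum f := by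
  simp only [pairSum, mul_sum]
  exact sum_congr rfl fun i _ ↦ sum_congr rfl fun j _ ↦ by ring

variable {A : Type*} [CommRing A] {n : ℕ}

theorem pairSum_add (f g : Fin n → A) :
    pairSum (fun i ↦ f i + g i) =
      pairSum f + pairSum g + ((∑ i, f i) * ∑ i, g i - ∑ i, f i * g i) := by
  induction n with
  | zero => simp [pairSum]
  | succ n ih =>
    simp only [pairSum_succ, ih, Fin.sum_univ_succ, sum_add_distrib]
    ring

theorem two_mul_pairSum (f : Fin n → A) :
    2 * pairSum f = (∑ i, f i) ^ 2 - ∑ i, f i ^ 2 := by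
  induction n with
  | zero => simp [pairSum]
  | succ n ih =>
    simp only [pairSum_succ, mul_add, ih, Fin.sum_univ_succ]
    ring

theorem exists_prod_one_add_mul_eq (y : A) (β : Fin n → A) :
    ∃ c, ∏ i, (1 + y * β i) = 1 + y * ∑ i, β i + y ^ 2 * pairSum β + y ^ 3 * c := by
  induction n with
  | zero => exact ⟨0, by simp [pairSum]⟩
  | succ n ih =>
    obtain ⟨c, hc⟩ := ih fun i ↦ β i.succ
    refine ⟨β 0 * pairSum (fun i ↦ β i.succ) + c + y * β 0 * c, ?_⟩
    rw [Fin.prod_univ_succ, hc, Fin.sum_univ_succ, pairSum_succ]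
    ring

end PairSum

section EightEqZero

variable {A : Type*} [CommRing A] {n : ℕ} {u y : A}

theorem prod_add_mul_of_eight_eq_zero (h8 : (8 : A) = 0) (hn : Odd n) (hu : u ^ 2 = 1)
    (hy : Even y) (β : Fin n → A) :
    ∏ i, (u + y * β i) = u + y * ∑ i, β i + u * y ^ 2 * pairSum β := by
  have y_cube : y ^ 3 = 0 := by
    obtain ⟨t, rfl⟩ := hy
    linear_combination t ^ 3 * h8
  have u_pow : u ^ n = u := by
    obtain ⟨k, rfl⟩ := hn
    rw [pow_succ, pow_mul, hu, one_pow, one_mul]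
  have factor (i : Fin n) : u + y * β i = u * (1 + u * y * β i) := by
    linear_combination -(y * β i) * hu
  obtain ⟨c, hc⟩ := exists_prod_one_add_mul_eq (u * y) β
  calc ∏ i, (u + y * β i) = u ^ n * ∏ i, (1 + u * y * β i) := by
        simp only [factor, prod_mul_distrib, prod_const, card_univ, Fintype.card_fin]
    _ = u + y * ∑ i, β i + u * y ^ 2 * pairSum β := by
        rw [u_pow, hc]
        linear_combination (y * ∑ i, β i + u * y ^ 2 * pairSum β) * hu + u ^ 4 * c * y_cube

theorem sq_mul_pairSum_of_eight_eq_zero (h8 : (8 : A) = 0) (hy : Even y) (a b c : Fin n → A) :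
    y ^ 2 * pairSum (fun i ↦ a i + 2 * b i + 3 * c i) =
      y ^ 2 * (pairSum a + pairSum c + 3 * ((∑ i, a i) * ∑ i, c i - ∑ i, a i * c i)) := by
  have two_mul_sq : 2 * y ^ 2 = 0 := by
    obtain ⟨t, rfl⟩ := hy
    linear_combination t ^ 2 * h8
  have sum_ab_mul_c : ∑ i, (a i + 2 * b i) * (3 * c i) =
      3 * ∑ i, a i * c i + 6 * ∑ i, b i * c i := by
    simp only [mul_sum, ← sum_add_distrib]
    exact sum_congr rfl fun i _ ↦ by ring
  have sum_a_mul_b : ∑ i, a i * (2 * b i) = 2 * ∑ i, a i * b i := by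
    simp only [mul_sum, mul_left_comm]
  simp only [pairSum_add, pairSum_const_mul, sum_ab_mul_c, sum_a_mul_b, sum_add_distrib, ← mul_sum]
  linear_combination (2 * pairSum b + 4 * pairSum c + ((∑ i, a i) * ∑ i, b i - ∑ i, a i * b i) +
    3 * ((∑ i, b i) * ∑ i, c i - ∑ i, b i * c i)) * two_mul_sq

theorem prod_add_mul_linearComb_of_eight_eq_zero (h8 : (8 : A) = 0) (hn : Odd n) (hu : u ^ 2 = 1)
    (hy : Even y) (a b c : Fin n → A) :
    ∏ i, (u + y * (a i + 2 * b i + 3 * c i)) =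
      u + y * ∑ i, a i + 2 * y * ∑ i, b i + 3 * y * ∑ i, c i
        + u * y ^ 2 * pairSum a + u * y ^ 2 * pairSum c
        + 3 * u * y ^ 2 * ((∑ i, a i) * ∑ i, c i - ∑ i, a i * c i) := by
  rw [prod_add_mul_of_eight_eq_zero h8 hn hu hy, mul_assoc u,
    sq_mul_pairSum_of_eight_eq_zero h8 hy]
  simp only [sum_add_distrib, ← mul_sum]
  ring

theorem intCast_sq_of_eight_eq_zero (h8 : (8 : A) = 0) {m : ℤ} (hm : Odd m) :
    (m : A) ^ 2 = 1 := by
  obtain ⟨k, hk⟩ := Int.eight_dvd_sq_sub_one_of_odd hm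
  have hk' := congrArg (Int.cast : ℤ → A) hk
  push_cast at hk'
  linear_combination hk' + k * h8

end EightEqZero

theorem X_mul_derivative_X_pow {R : Type*} [CommSemiring R] (k : ℕ) :
    X * derivative (X ^ k : R[X]) = C (k : R) * X ^ k := by
  cases k with
  | zero => simp
  | succ k => rw [derivative_X_pow, Nat.add_sub_cancel]; ring

theorem natCast_mul_sub_X_mul_derivative {R : Type*} [CommRing R] {s n : ℕ} (hn : 3 * s ≤ n)
    {F : R[X]} (hF : F = X ^ n + X ^ (n - s) + X ^ (n - 2 * s) + X ^ (n - 3 * s) + 1) :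
    C (n : R) * F - X * derivative F =
      C (n : R) + C (s : R) * (X ^ (n - s) + 2 * X ^ (n - 2 * s) + 3 * X ^ (n - 3 * s)) := by
  simp only [hF, derivative_add, derivative_one, mul_add, X_mul_derivative_X_pow]
  rw [Nat.cast_sub (by lia), Nat.cast_sub (by lia), Nat.cast_sub hn]
  simp only [Nat.cast_mul, map_sub, map_mul, map_natCast, Nat.cast_ofNat, map_ofNat]
  ring

section Symmetric

open MvPolynomial (symmetricSubalgebra esymm esymm_isSymmetric esymmAlgEquiv
  esymmAlgEquiv_symm_apply psum psum_isSymmetric)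

theorem aeval_esymm_eq_coeff {R A : Type*} [CommRing R] [CommRing A] [Algebra R A]
    {n : ℕ} {α : Fin n → A} {F : R[X]}
    (hroots : F.map (algebraMap R A) = ∏ i, (X - C (α i))) {k : ℕ} (hk : k ≤ n) :
    MvPolynomial.aeval α (esymm (Fin n) R k) =
      algebraMap R A ((-1) ^ k * F.coeff (n - k)) := by
  have vieta := Multiset.prod_X_sub_C_coeff (univ.val.map α) (k := n - k) (by simp)
  rw [Multiset.map_map] at vieta
  change (∏ i, (X - C (α i))).coeff _ = _ at vieta
  simp only [← hroots, coeff_map, Multiset.card_map, card_val, card_univ, Fintype.card_fin,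
    Nat.sub_sub_self hk] at vieta
  simp [MvPolynomial.aeval_esymm_eq_multiset_esymm, vieta, ← mul_assoc, ← mul_pow]

theorem exists_algHom_symmetricSubalgebra {R A : Type*} [CommRing R] [CommRing A] [Algebra R A]
    {n : ℕ} {α : Fin n → A} {F : R[X]}
    (hroots : F.map (algebraMap R A) = ∏ i, (X - C (α i))) :
    ∃ φ : symmetricSubalgebra (Fin n) R →ₐ[R] R,
      ∀ p, algebraMap R A (φ p) = MvPolynomial.aeval α (p : MvPolynomial (Fin n) R) := by
  let e := esymmAlgEquiv (Fin n) R (Fintype.card_fin n)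
  let esymmValue (i : Fin n) : R := (-1) ^ (i + 1 : ℕ) * F.coeff (n - (i + 1))
  refine ⟨(MvPolynomial.aeval esymmValue).comp e.symm, fun p ↦ ?_⟩
  have hom_eq : (Algebra.ofId R A).comp (MvPolynomial.aeval esymmValue) =
      ((MvPolynomial.aeval α).comp (symmetricSubalgebra (Fin n) R).val).comp e := by
    refine MvPolynomial.algHom_ext fun i ↦ ?_
    have e_X : e (MvPolynomial.X i) = ⟨esymm (Fin n) R (i + 1), esymm_isSymmetric _ _ _⟩ := by
      rw [← esymmAlgEquiv_symm_apply R (Fintype.card_fin n), AlgEquiv.apply_symm_apply]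
    simp [e_X, esymmValue, aeval_esymm_eq_coeff hroots i.2, Algebra.ofId_apply]
  simpa using DFunLike.congr_fun hom_eq (e.symm p)

theorem isSymmetric_of_C_mul {σ R : Type*} [CommRing R] [IsDomain R] {k : R} (hk : k ≠ 0)
    {p : MvPolynomial σ R} (h : (MvPolynomial.C k * p).IsSymmetric) : p.IsSymmetric := by
  intro e
  have := h e
  rw [map_mul, MvPolynomial.rename_C] at this
  exact mul_left_cancel₀ (by simpa using hk) this

theorem algHom_modEq_of_map_castRingHom_eq {σ : Type*} {m : ℕ} (hm : m ≠ 0)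
    (φ : symmetricSubalgebra σ ℤ →ₐ[ℤ] ℤ) {p q : symmetricSubalgebra σ ℤ}
    (h : MvPolynomial.map (Int.castRingHom (ZMod m)) (p : MvPolynomial σ ℤ) =
      MvPolynomial.map (Int.castRingHom (ZMod m)) q) :
    φ p ≡ φ q [ZMOD m] := by
  obtain ⟨r, hr⟩ : MvPolynomial.C (m : ℤ) ∣ (q - p : MvPolynomial σ ℤ) := by
    rw [MvPolynomial.C_dvd_iff_zmod, map_sub, h, sub_self]
  have r_symm : r.IsSymmetric :=
    isSymmetric_of_C_mul (Int.natCast_ne_zero.2 hm) (hr ▸ q.2.sub p.2)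
  have sub_eq : q - p = (m : ℤ) • (⟨r, r_symm⟩ : symmetricSubalgebra σ ℤ) :=
    Subtype.ext <| by simpa [MvPolynomial.smul_eq_C_mul] using hr
  rw [Int.modEq_iff_dvd, ← map_sub, sub_eq, map_smul]
  exact dvd_mul_right _ _

/-- The power sum `∑ i, X i ^ k` as an element of the ring of symmetric polynomials. -/
noncomputable def symmPowerSum (n k : ℕ) : symmetricSubalgebra (Fin n) ℤ :=
  ⟨psum (Fin n) ℤ k, psum_isSymmetric _ _ _⟩

theorem isSymmetric_pairSum_X_pow (n k : ℕ) :
    (pairSum fun i : Fin n ↦ (MvPolynomial.X i ^ k : MvPolynomial (Fin n) ℤ)).IsSymmetric := by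
  have two_mul : MvPolynomial.C 2 * (pairSum fun i : Fin n ↦ MvPolynomial.X i ^ k) =
      psum (Fin n) ℤ k ^ 2 - psum (Fin n) ℤ (k * 2) := by
    simpa only [psum, pow_mul, map_ofNat] using two_mul_pairSum _
  refine isSymmetric_of_C_mul two_ne_zero (two_mul ▸ ?_)
  rw [pow_two]
  exact ((psum_isSymmetric _ _ k).mul (psum_isSymmetric _ _ k)).sub (psum_isSymmetric _ _ _)

/-- The sum of `(X i * X j) ^ k` over `i < j` as an element of the ring of symmetric polynomials. -/
noncomputable def symmPairPowerSum (n k : ℕ) : symmetricSubalgebra (Fin n) ℤ :=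
  ⟨pairSum fun i ↦ MvPolynomial.X i ^ k, isSymmetric_pairSum_X_pow n k⟩

theorem isSymmetric_prod_aeval_X {R : Type*} [CommSemiring R] (n : ℕ) (H : R[X]) :
    (∏ i : Fin n, aeval (MvPolynomial.X i : MvPolynomial (Fin n) R) H).IsSymmetric := by
  intro e
  simp only [map_prod, ← aeval_algHom_apply, MvPolynomial.rename_X]
  exact Equiv.prod_comp e fun i ↦ aeval (MvPolynomial.X i : MvPolynomial (Fin n) R) H

/-- The product of the values of `H` at the variables, as an element of the ring of symmetric
polynomials. Its value at the roots of a monic polynomial is a resultant. -/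
noncomputable def symmProdEval (n : ℕ) (H : ℤ[X]) : symmetricSubalgebra (Fin n) ℤ :=
  ⟨∏ i, aeval (MvPolynomial.X i) H, isSymmetric_prod_aeval_X n H⟩

theorem algHom_symmProdEval_modEq {n p q r : ℕ} {u v : ℤ} (hn : Odd n) (hu : Odd u) (hv : Even v)
    {H : ℤ[X]} (hH : H = C u + C v * (X ^ p + 2 * X ^ q + 3 * X ^ r))
    (φ : symmetricSubalgebra (Fin n) ℤ →ₐ[ℤ] ℤ) :
    φ (symmProdEval n H) ≡
      u + v * φ (symmPowerSum n p) + 2 * v * φ (symmPowerSum n q) + 3 * v * φ (symmPowerSum n r)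
        + u * v ^ 2 * φ (symmPairPowerSum n p) + u * v ^ 2 * φ (symmPairPowerSum n r)
        + 3 * u * v ^ 2 * (φ (symmPowerSum n p) * φ (symmPowerSum n r)
          - φ (symmPowerSum n (p + r))) [ZMOD 8] := by
  have h8 : (8 : MvPolynomial (Fin n) (ZMod 8)) = 0 := by
    exact_mod_cast CharP.cast_eq_zero (MvPolynomial (Fin n) (ZMod 8)) 8
  have expansion := prod_add_mul_linearComb_of_eight_eq_zero h8 hn
    (intCast_sq_of_eight_eq_zero h8 hu) (hv.map (Int.castRingHom (MvPolynomial (Fin n) (ZMod 8))))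
    (fun i ↦ MvPolynomial.X i ^ p) (fun i ↦ MvPolynomial.X i ^ q) (fun i ↦ MvPolynomial.X i ^ r)
  let rhs : symmetricSubalgebra (Fin n) ℤ :=
    u + v * symmPowerSum n p + 2 * v * symmPowerSum n q + 3 * v * symmPowerSum n r
      + u * v ^ 2 * symmPairPowerSum n p + u * v ^ 2 * symmPairPowerSum n r
      + 3 * u * v ^ 2 * (symmPowerSum n p * symmPowerSum n r - symmPowerSum n (p + r))
  have congruence : φ (symmProdEval n H) ≡ φ rhs [ZMOD (8 : ℕ)] := by
    refine algHom_modEq_of_map_castRingHom_eq (by norm_num) φ ?_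
    have coe_ofNat (k : ℕ) [k.AtLeastTwo] :
        ((ofNat(k) : symmetricSubalgebra (Fin n) ℤ) : MvPolynomial (Fin n) ℤ) =
          ofNat(k) := rfl
    simpa [rhs, hH, symmProdEval, symmPowerSum, symmPairPowerSum, MvPolynomial.psum, map_pairSum,
      pow_add, map_ofNat, coe_ofNat] using expansion
  simpa [rhs, map_ofNat] using congruence

end Symmetric

theorem prod_H_mod_eight_expansion_general {A : Type*} [CommRing A] (s n : ℕ) (hs : Even s)
    (hodd : Odd n) (hn : 3 * s < n) (α : Fin n → A)
    (F : Polynomial ℤ)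
    (hF : F = X ^ n + X ^ (n - s) + X ^ (n - 2 * s) + X ^ (n - 3 * s) + 1)
    (hroots : F.map (Int.castRingHom A) = ∏ i : Fin n, (X - C (α i))) :
    ∃ P Sns S2s S3s S4s Tns T3s : ℤ,
      (P : A) = ∏ i : Fin n,
        Polynomial.aeval (α i) (C (n : ℤ) * F - X * Polynomial.derivative F) ∧
      (Sns : A) = ∑ i : Fin n, (α i) ^ (n - s) ∧
      (S2s : A) = ∑ i : Fin n, (α i) ^ (n - 2 * s) ∧
      (S3s : A) = ∑ i : Fin n, (α i) ^ (n - 3 * s) ∧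
      (S4s : A) = ∑ i : Fin n, (α i) ^ (2 * n - 4 * s) ∧
      (Tns : A) = ∑ i : Fin n, ∑ j ∈ Finset.Ioi i, (α i * α j) ^ (n - s) ∧
      (T3s : A) = ∑ i : Fin n, ∑ j ∈ Finset.Ioi i, (α i * α j) ^ (n - 3 * s) ∧
      P ≡ (n : ℤ) + s * Sns + 2 * s * S2s + 3 * s * S3s
            + n * s ^ 2 * Tns + n * s ^ 2 * T3s
            + 3 * n * s ^ 2 * (Sns * S3s - S4s) [ZMOD 8] := by
  obtain ⟨φ, hφ⟩ := exists_algHom_symmetricSubalgebra (R := ℤ) hroots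
  have power_sum (k : ℕ) : (φ (symmPowerSum n k) : A) = ∑ i, α i ^ k := by
    simpa [symmPowerSum, MvPolynomial.psum] using hφ (symmPowerSum n k)
  have pair_sum (k : ℕ) :
      (φ (symmPairPowerSum n k) : A) = ∑ i, ∑ j ∈ Ioi i, (α i * α j) ^ k := by
    simpa [symmPairPowerSum, pairSum, mul_pow] using hφ (symmPairPowerSum n k)
  have prod_eval (H : ℤ[X]) : (φ (symmProdEval n H) : A) = ∏ i, aeval (α i) H := by
    simpa [symmProdEval, ← aeval_algHom_apply] using hφ (symmProdEval n H)
  have exponents : 2 * n - 4 * s = n - s + (n - 3 * s) := by lia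
  have congruence := algHom_symmProdEval_modEq hodd ((Int.odd_coe_nat n).2 hodd)
    ((Int.even_coe_nat s).2 hs) (natCast_mul_sub_X_mul_derivative hn.le hF) φ
  refine ⟨_, _, _, _, _, _, _, prod_eval _, power_sum _, power_sum _, power_sum _, power_sum _,
    pair_sum _, pair_sum _, ?_⟩
  simpa [exponents] using congruence

theorem prod_H_mod_eight_expansion (s n : ℕ) (hs : Even s) (hs0 : 0 < s)
    (hodd : Odd n) (hn : 3 * s < n) (α : Fin n → ℂ)
    (F : Polynomial ℤ)
    (hF : F = X ^ n + X ^ (n - s) + X ^ (n - 2 * s) + X ^ (n - 3 * s) + 1)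
    (hroots : F.map (Int.castRingHom ℂ) = ∏ i : Fin n, (X - C (α i))) :
    ∃ P Sns S2s S3s S4s Tns T3s : ℤ,
      (P : ℂ) = ∏ i : Fin n,
        Polynomial.aeval (α i) (C (n : ℤ) * F - X * Polynomial.derivative F) ∧
      (Sns : ℂ) = ∑ i : Fin n, (α i) ^ (n - s) ∧
      (S2s : ℂ) = ∑ i : Fin n, (α i) ^ (n - 2 * s) ∧
      (S3s : ℂ) = ∑ i : Fin n, (α i) ^ (n - 3 * s) ∧
      (S4s : ℂ) = ∑ i : Fin n, (α i) ^ (2 * n - 4 * s) ∧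
      (Tns : ℂ) = ∑ i : Fin n, ∑ j ∈ Finset.Ioi i, (α i * α j) ^ (n - s) ∧
      (T3s : ℂ) = ∑ i : Fin n, ∑ j ∈ Finset.Ioi i, (α i * α j) ^ (n - 3 * s) ∧
      P ≡ (n : ℤ) + s * Sns + 2 * s * S2s + 3 * s * S3s
            + n * s ^ 2 * Tns + n * s ^ 2 * T3s
            + 3 * n * s ^ 2 * (Sns * S3s - S4s) [ZMOD 8] :=
  prod_H_mod_eight_expansion_general s n hs hodd hn α F hF hroots
end

section
/- Let s be an even positive integer, n an odd integer with n > 3s, and let α_1, ..., α_n ∈ ℂ be the roots, counted with multiplicity, of F(X) = X^n + X^(n-s) + X^(n-2s) + X^(n-3s) + 1 ∈ ℤ[X]. Set H(X) := n·F(X) − X·F'(X). Then the integer ∏_{i=1}^n H(α_i) satisfies ∏_{i=1}^n H(α_i) ≡ n (mod 8). -/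
open Polynomial Finset

/-!
Write `n = 3s + r` and `g = X^(2s+r) + 2X^(s+r) + 3X^r`, so that `H = n + s g` and the product is
`∏ (n + s γ_i)` with `γ_i = g(α_i)`. As a polynomial in `s` this product has integer coefficients,
and `s` is even, so modulo 8 only `n^n`, the linear coefficient and the parity of the quadratic
coefficient matter; by Newton it suffices that `∑ γ_i = 0` and `4 ∣ ∑ γ_i²`.

Let `p_m = ∑ α_i^m`. Since `F - 1` is an odd polynomial, `p_m = 0` for odd `m < n`, which gives
`∑ γ_i = 0`. Modulo 4, `∑ γ_i²` is `p_{4s+2r} + 2 p_{2s+2r} + p_{2r}`. Here `p_{2s+2r}` and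
`p_{2r}` are even, because `p_{2m} = p_m² - 2 e_2(α^m)` and `p_{s+r} = p_r = 0`; and
`p_{4s+2r} = p_{2r}`, as one sees by summing `(α_i^s - 1) α_i^r F(α_i) = 0`.
-/

section RootProducts

variable {ι A B : Type*} [Fintype ι] [CommRing A] [CommRing B]

theorem map_resultant_eq_prod_eval₂ (φ : A →+* B) {F : A[X]} {α : ι → B}
    (hF : F.map φ = ∏ i, (X - C (α i))) (h : A[X]) :
    φ (F.resultant h (Fintype.card ι) h.natDegree) = ∏ i, h.eval₂ φ (α i) := by
  nontriviality B
  have hdeg : (∏ i, (X - C (α i))).natDegree = Fintype.card ι := by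
    rw [natDegree_finsetProd_X_sub_C_eq_card, card_univ]
  rw [← resultant_map_map, hF, ← hdeg, resultant_prod_left _ _ _ _ (by simp) natDegree_map_le]
  simp only [natDegree_X_sub_C, resultant_X_sub_C_left _ _ _ natDegree_map_le, eval_map]

variable [Algebra A B] {F : A[X]} {α : ι → B}

theorem exists_map_eq_prod_C_add_C_aeval_mul_X
    (hF : F.map (algebraMap A B) = ∏ i, (X - C (α i))) (g : A[X]) (a : A) :
    ∃ Q : A[X], Q.map (algebraMap A B) =
      ∏ i, (C (algebraMap A B a) + C (aeval (α i) g) * X) := by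
  have hF' : (F.map C).map (mapRingHom (algebraMap A B)) = ∏ i, (X - C (C (α i))) := by
    rw [Polynomial.map_map, mapRingHom_comp_C, ← Polynomial.map_map, hF]
    simp [Polynomial.map_prod]
  have hprod := map_resultant_eq_prod_eval₂ _ hF' (C (C a) + C X * g.map C)
  refine ⟨_, hprod.trans (prod_congr rfl fun i _ ↦ ?_)⟩
  simp [eval₂_map, mapRingHom_comp_C, ← hom_eval₂, aeval_def, mul_comm X]

end RootProducts

section PencilCoefficients

variable {ι R : Type*} [CommRing R] (t : Finset ι) (a : R) (x : ι → R)

theorem coeff_zero_prod_C_add_C_mul_X : (∏ i ∈ t, (C a + C (x i) * X)).coeff 0 = a ^ #t := by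
  simp [coeff_zero_eq_eval_zero, eval_prod]

theorem mul_coeff_one_prod_C_add_C_mul_X :
    a * (∏ i ∈ t, (C a + C (x i) * X)).coeff 1 = a ^ #t * ∑ i ∈ t, x i := by
  classical
  induction t using Finset.induction_on with
  | empty => simp [coeff_one]
  | insert j t hj ih =>
    rw [prod_insert hj, sum_insert hj, card_insert_of_notMem hj, add_mul, coeff_add, coeff_C_mul,
      mul_assoc, coeff_C_mul, coeff_X_mul, coeff_zero_prod_C_add_C_mul_X]
    linear_combination a * ih

theorem two_mul_sq_mul_coeff_two_prod_C_add_C_mul_X :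
    2 * a ^ 2 * (∏ i ∈ t, (C a + C (x i) * X)).coeff 2 =
      a ^ #t * ((∑ i ∈ t, x i) ^ 2 - ∑ i ∈ t, x i ^ 2) := by
  classical
  induction t using Finset.induction_on with
  | empty => simp [coeff_one]
  | insert j t hj ih =>
    rw [prod_insert hj, sum_insert hj, sum_insert hj, card_insert_of_notMem hj, add_mul, coeff_add,
      coeff_C_mul, mul_assoc (C (x j)), coeff_C_mul, coeff_X_mul]
    linear_combination a * ih + 2 * a * x j * mul_coeff_one_prod_C_add_C_mul_X t a x

end PencilCoefficients

section PowerSums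

variable {ι A R : Type*} [Fintype ι] [CommRing A] [CommRing R] [Algebra A R] {F : A[X]} {α : ι → R}

theorem exists_sum_aeval_eq_and_sum_aeval_sq_eq
    (hF : F.map (algebraMap A R) = ∏ i, (X - C (α i))) (g : A[X]) :
    ∃ t e : A, ∑ i, aeval (α i) g = algebraMap A R t ∧
      ∑ i, aeval (α i) g ^ 2 = algebraMap A R (t ^ 2 - 2 * e) := by
  obtain ⟨Q, hQ⟩ := exists_map_eq_prod_C_add_C_aeval_mul_X hF g 1
  have h₁ := mul_coeff_one_prod_C_add_C_mul_X univ (algebraMap A R 1) fun i ↦ aeval (α i) g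
  have h₂ := two_mul_sq_mul_coeff_two_prod_C_add_C_mul_X univ (algebraMap A R 1)
    fun i ↦ aeval (α i) g
  rw [← hQ, coeff_map] at h₁ h₂
  simp only [map_one, one_pow, one_mul, mul_one] at h₁ h₂
  refine ⟨Q.coeff 1, Q.coeff 2, h₁.symm, ?_⟩
  rw [map_sub, map_pow, map_mul, map_ofNat, h₁, h₂]
  ring

theorem exists_sum_aeval_sq_eq_two_mul (hF : F.map (algebraMap A R) = ∏ i, (X - C (α i)))
    {g : A[X]} (hg : ∑ i, aeval (α i) g = 0) :
    ∃ e : A, ∑ i, aeval (α i) g ^ 2 = 2 * algebraMap A R e := by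
  obtain ⟨t, e, ht, he⟩ := exists_sum_aeval_eq_and_sum_aeval_sq_eq hF g
  refine ⟨-e, ?_⟩
  rw [he, map_sub, map_pow, ← ht, hg, map_mul, map_ofNat, map_neg]
  ring

theorem aeval_esymm_eq_coeff_prod_X_sub_C {k : ℕ} (hk : k ≤ Fintype.card ι) :
    MvPolynomial.aeval α (MvPolynomial.esymm ι ℤ k) =
      (-1) ^ k * (∏ i, (X - C (α i))).coeff (Fintype.card ι - k) := by
  have vieta : (∏ i, (X - C (α i))).coeff (Fintype.card ι - k) =
      (-1) ^ k * (univ.val.map α).esymm k := by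
    simpa [Nat.sub_sub_self hk, Function.comp_def] using
      (univ.val.map α).prod_X_sub_C_coeff (k := Fintype.card ι - k) (by simp)
  rw [MvPolynomial.aeval_esymm_eq_multiset_esymm, vieta, ← mul_assoc, ← mul_pow]
  simp

theorem sum_pow_eq_zero_of_odd {N : ℕ}
    (h : ∀ k < N, Odd k → MvPolynomial.aeval α (MvPolynomial.esymm ι ℤ k) = 0)
    {m : ℕ} (hm : Odd m) (hmN : m < N) : ∑ i, α i ^ m = 0 := by
  induction m using Nat.strong_induction_on with
  | _ m ih =>
    have newton := congrArg (MvPolynomial.aeval α)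
      (MvPolynomial.psum_eq_mul_esymm_sub_sum ι ℤ m hm.pos)
    simp only [map_sub, map_mul, map_sum, map_pow, map_neg, map_one, map_natCast,
      MvPolynomial.psum, MvPolynomial.aeval_X, h m hmN hm, mul_zero, zero_sub] at newton
    rw [newton, neg_eq_zero]
    refine sum_eq_zero fun ⟨a, b⟩ hab ↦ ?_
    obtain ⟨hab, ha₀, ham⟩ : a + b = m ∧ 0 < a ∧ a < m := by simpa using hab
    rcases Nat.even_or_odd a with ha | ha
    · rw [ih b (by omega) (by grind) (by omega), mul_zero]
    · rw [h a (by omega) ha, mul_zero, zero_mul]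

end PowerSums

section Congruences

theorem eval_modEq_eight_of_even {Q : ℤ[X]} (h₁ : Q.coeff 1 = 0) (h₂ : Even (Q.coeff 2)) {s : ℤ}
    (hs : Even s) : Q.eval s ≡ Q.coeff 0 [ZMOD 8] := by
  obtain ⟨c, hc⟩ := h₂
  obtain ⟨t, rfl⟩ := hs
  have expand : Q = ((Q.divX.divX.divX * X + C (Q.coeff 2)) * X + C (Q.coeff 1)) * X
      + C (Q.coeff 0) := by
    have e₂ := divX_mul_X_add Q.divX.divX
    have e₁ := divX_mul_X_add Q.divX
    simp only [coeff_divX, zero_add, Nat.reduceAdd] at e₁ e₂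
    rw [e₂, e₁, divX_mul_X_add]
  refine (Int.modEq_iff_dvd.mpr ⟨t ^ 3 * Q.divX.divX.divX.eval (t + t) + c * t ^ 2, ?_⟩).symm
  have h := congrArg (eval (t + t)) expand
  simp only [eval_add, eval_mul, eval_X, eval_C, h₁, hc] at h
  linear_combination h

theorem odd_pow_modEq_eight_self {x : ℤ} (hx : Odd x) {k : ℕ} (hk : Odd k) :
    x ^ k ≡ x [ZMOD 8] := by
  obtain ⟨j, rfl⟩ := hk
  have hsq : x ^ 2 ≡ 1 [ZMOD 8] :=
    (Int.modEq_iff_dvd.mpr (Int.eight_dvd_sq_sub_one_of_odd hx)).symm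
  simpa only [one_pow, one_mul, ← pow_mul, ← pow_succ] using (hsq.pow j).mul_right x

theorem exists_eq_prod_add_mul_aeval_modEq_eight {ι R : Type*} [Fintype ι] [CommRing R]
    [CharZero R] {F : ℤ[X]} {α : ι → R} (hF : F.map (algebraMap ℤ R) = ∏ i, (X - C (α i)))
    {g : ℤ[X]} (hsum : ∑ i, aeval (α i) g = 0) {w : ℤ} (hsq : ∑ i, aeval (α i) g ^ 2 = 4 * (w : R))
    {a s : ℤ} (ha : Odd a) (hs : Even s) :
    ∃ P : ℤ, (P : R) = ∏ i, (a + s * aeval (α i) g) ∧ P ≡ a ^ Fintype.card ι [ZMOD 8] := by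
  obtain ⟨Q, hQ⟩ := exists_map_eq_prod_C_add_C_aeval_mul_X hF g a
  have coeff_cast (k : ℕ) : ((Q.coeff k : ℤ) : R) =
      (∏ i, (C (a : R) + C (aeval (α i) g) * X)).coeff k := by
    simpa using congrArg (coeff · k) hQ
  have h₀ : Q.coeff 0 = a ^ Fintype.card ι := by
    apply Int.cast_injective (α := R)
    rw [coeff_cast, coeff_zero_prod_C_add_C_mul_X, Int.cast_pow, card_univ]
  have h₁ : a * Q.coeff 1 = 0 := by
    apply Int.cast_injective (α := R)
    rw [Int.cast_mul, coeff_cast, mul_coeff_one_prod_C_add_C_mul_X, hsum, mul_zero, Int.cast_zero]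
  have h₂ : 2 * a ^ 2 * Q.coeff 2 = a ^ Fintype.card ι * (-(4 * w)) := by
    apply Int.cast_injective (α := R)
    have := two_mul_sq_mul_coeff_two_prod_C_add_C_mul_X univ (a : R) fun i ↦ aeval (α i) g
    rw [← coeff_cast, hsum, hsq, card_univ] at this
    push_cast
    linear_combination this
  have h₁' : Q.coeff 1 = 0 := by
    refine (mul_eq_zero.mp h₁).resolve_left ?_
    rintro rfl
    simp at ha
  have h₂' : Even (Q.coeff 2) := by
    have : Even (a ^ 2 * Q.coeff 2) := ⟨-(a ^ Fintype.card ι * w), by linarith⟩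
    exact (Int.even_mul.mp this).resolve_left (Int.not_even_iff_odd.mpr ha.pow)
  refine ⟨Q.eval s, ?_, h₀ ▸ eval_modEq_eight_of_even h₁' h₂' hs⟩
  have := congrArg (eval (s : R)) hQ
  simpa [eval_prod, mul_comm (s : R)] using this

end Congruences

/-- The polynomial `F` of the theorem, with `n = 3 * s + r`. -/
noncomputable def pentanomial (s r : ℕ) : ℤ[X] :=
  X ^ (3 * s + r) + X ^ (2 * s + r) + X ^ (s + r) + X ^ r + 1

/-- The polynomial `(n * F - X * F' - n) / s` for `F = pentanomial s r` and `n = 3 * s + r`. -/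
noncomputable def reducedH (s r : ℕ) : ℤ[X] :=
  X ^ (2 * s + r) + 2 * X ^ (s + r) + 3 * X ^ r

theorem C_mul_pentanomial_sub_X_mul_derivative (s : ℕ) {r : ℕ} (hr : r ≠ 0) :
    C ((3 * s + r : ℕ) : ℤ) * pentanomial s r - X * derivative (pentanomial s r) =
      C ((3 * s + r : ℕ) : ℤ) + C (s : ℤ) * reducedH s r := by
  obtain ⟨k, rfl⟩ := Nat.exists_eq_add_one_of_ne_zero hr
  simp only [pentanomial, reducedH, ← add_assoc, derivative_add, derivative_X_pow_succ,
    derivative_one, add_zero, eq_intCast, Nat.cast_add, Nat.cast_mul, Nat.cast_ofNat, Nat.cast_one,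
    Int.cast_add, Int.cast_mul, Int.cast_ofNat, Int.cast_natCast, Int.cast_one, map_natCast]
  ring

section PentanomialRoots

variable {R : Type*} [CommRing R] {s r : ℕ} {α : Fin (3 * s + r) → R}

theorem coeff_pentanomial_of_even (hs : Even s) (hr : Odd r) {k : ℕ} (hk : Even k) (hk₀ : k ≠ 0) :
    (pentanomial s r).coeff k = 0 := by
  simp only [pentanomial, coeff_add, coeff_X_pow, coeff_one]
  grind

theorem pow_add_pow_eq_of_aeval_pentanomial_eq_zero {x : R} (hx : aeval x (pentanomial s r) = 0) :
    x ^ (4 * s + 2 * r) + x ^ (s + r) = x ^ (2 * r) + x ^ r := by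
  simp only [pentanomial, map_add, map_pow, aeval_X, map_one] at hx
  linear_combination (x ^ s - 1) * x ^ r * hx

variable (hs : Even s) (hr : Odd r)
  (hF : (pentanomial s r).map (algebraMap ℤ R) = ∏ i, (X - C (α i)))
include hs hr hF

theorem sum_pow_root_pentanomial_eq_zero {m : ℕ} (hm : Odd m) (hmn : m < 3 * s + r) :
    ∑ i, α i ^ m = 0 := by
  refine sum_pow_eq_zero_of_odd (fun k hkn hk ↦ ?_) hm hmn
  rw [aeval_esymm_eq_coeff_prod_X_sub_C (by simpa using hkn.le), ← hF, coeff_map, Fintype.card_fin,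
    coeff_pentanomial_of_even hs hr (by grind) (by omega), map_zero, mul_zero]

theorem sum_aeval_reducedH_eq_zero (hs₀ : 0 < s) : ∑ i, aeval (α i) (reducedH s r) = 0 := by
  have odd_vanish {m : ℕ} (hm : Odd m) (hmn : m < 3 * s + r) : ∑ i, α i ^ m = 0 :=
    sum_pow_root_pentanomial_eq_zero hs hr hF hm hmn
  simp only [reducedH, map_add, map_mul, map_pow, aeval_X, map_ofNat, sum_add_distrib, ← mul_sum]
  rw [odd_vanish (m := 2 * s + r) (by grind) (by omega),
    odd_vanish (m := s + r) (by grind) (by omega), odd_vanish hr (by omega)]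
  simp only [mul_zero, add_zero]

theorem sum_pow_four_mul_add_root_pentanomial (hs₀ : 0 < s) :
    ∑ i, α i ^ (4 * s + 2 * r) = ∑ i, α i ^ (2 * r) := by
  have root (i) : aeval (α i) (pentanomial s r) = 0 := by
    rw [← eval_map_algebraMap, hF, eval_prod]
    exact prod_eq_zero (mem_univ i) (by simp)
  have h : ∑ i, α i ^ (4 * s + 2 * r) + ∑ i, α i ^ (s + r) =
      ∑ i, α i ^ (2 * r) + ∑ i, α i ^ r := by
    simp only [← sum_add_distrib, pow_add_pow_eq_of_aeval_pentanomial_eq_zero (root _)]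
  rwa [sum_pow_root_pentanomial_eq_zero hs hr hF (m := s + r) (by grind) (by omega),
    sum_pow_root_pentanomial_eq_zero hs hr hF hr (by omega), add_zero, add_zero] at h

theorem exists_sum_pow_two_mul_root_pentanomial_eq {m : ℕ} (hm : Odd m) (hmn : m < 3 * s + r) :
    ∃ e : ℤ, ∑ i, α i ^ (2 * m) = 2 * (e : R) := by
  have h : ∑ i, aeval (α i) (X ^ m : ℤ[X]) = 0 := by
    simpa using sum_pow_root_pentanomial_eq_zero hs hr hF hm hmn
  simpa [← pow_mul, mul_comm] using exists_sum_aeval_sq_eq_two_mul hF h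

theorem exists_sum_aeval_reducedH_sq_eq_four_mul (hs₀ : 0 < s) :
    ∃ w : ℤ, ∑ i, aeval (α i) (reducedH s r) ^ 2 = 4 * (w : R) := by
  let p (m : ℕ) : R := ∑ i, α i ^ m
  have integral (m : ℕ) : ∃ z : ℤ, p m = z := by
    obtain ⟨z, -, hz, -⟩ := exists_sum_aeval_eq_and_sum_aeval_sq_eq hF (X ^ m)
    exact ⟨z, by simpa using hz⟩
  have shift : p (4 * s + 2 * r) = p (2 * r) := sum_pow_four_mul_add_root_pentanomial hs hr hF hs₀
  have expand : ∑ i, aeval (α i) (reducedH s r) ^ 2 = p (4 * s + 2 * r) + 4 * p (3 * s + 2 * r)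
      + 10 * p (2 * (s + r)) + 12 * p (s + 2 * r) + 9 * p (2 * r) := by
    simp only [p, reducedH, mul_sum, ← sum_add_distrib]
    refine sum_congr rfl fun i _ ↦ ?_
    simp only [map_add, map_mul, map_pow, aeval_X, map_ofNat]
    ring
  obtain ⟨u, hu⟩ := integral (3 * s + 2 * r)
  obtain ⟨v, hv⟩ := integral (s + 2 * r)
  obtain ⟨b, hb⟩ : ∃ b : ℤ, p (2 * (s + r)) = 2 * b :=
    exists_sum_pow_two_mul_root_pentanomial_eq hs hr hF (by grind) (by omega)
  obtain ⟨c, hc⟩ : ∃ c : ℤ, p (2 * r) = 2 * c :=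
    exists_sum_pow_two_mul_root_pentanomial_eq hs hr hF hr (by omega)
  refine ⟨u + 5 * b + 3 * v + 5 * c, ?_⟩
  rw [expand, shift, hu, hv, hb, hc]
  push_cast
  ring

end PentanomialRoots

theorem prod_H_mod_eight_general {R : Type*} [CommRing R] [CharZero R] (s n : ℕ) (hs : Even s)
    (hs0 : 0 < s) (hodd : Odd n) (hn : 3 * s < n) (α : Fin n → R) (F : Polynomial ℤ)
    (hF : F = X ^ n + X ^ (n - s) + X ^ (n - 2 * s) + X ^ (n - 3 * s) + 1)
    (hroots : F.map (Int.castRingHom R) = ∏ i : Fin n, (X - C (α i))) :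
    ∃ P : ℤ,
      (P : R) = ∏ i : Fin n,
        Polynomial.aeval (α i) (C (n : ℤ) * F - X * Polynomial.derivative F) ∧
      P ≡ (n : ℤ) [ZMOD 8] := by
  obtain ⟨r, rfl⟩ := Nat.exists_eq_add_of_le hn.le
  have hr : Odd r := by grind
  obtain rfl : F = pentanomial s r := by
    rw [hF, pentanomial, show 3 * s + r - s = 2 * s + r by omega,
      show 3 * s + r - 2 * s = s + r by omega, Nat.add_sub_cancel_left]
  obtain ⟨w, hw⟩ := exists_sum_aeval_reducedH_sq_eq_four_mul hs hr hroots hs0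
  have hn_odd : Odd ((3 * s + r : ℕ) : ℤ) := mod_cast hodd
  obtain ⟨P, hP, hmod⟩ := exists_eq_prod_add_mul_aeval_modEq_eight hroots
    (sum_aeval_reducedH_eq_zero hs hr hroots hs0) hw hn_odd (s := s) (mod_cast hs)
  refine ⟨P, ?_, hmod.trans ?_⟩
  · rw [C_mul_pentanomial_sub_X_mul_derivative s hr.pos.ne', hP]
    simp only [map_add, map_mul, eq_intCast, map_intCast]
  · simpa only [Fintype.card_fin] using odd_pow_modEq_eight_self hn_odd hodd

theorem prod_H_mod_eight (s n : ℕ) (hs : Even s) (hs0 : 0 < s)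
    (hodd : Odd n) (hn : 3 * s < n) (α : Fin n → ℂ)
    (F : Polynomial ℤ)
    (hF : F = X ^ n + X ^ (n - s) + X ^ (n - 2 * s) + X ^ (n - 3 * s) + 1)
    (hroots : F.map (Int.castRingHom ℂ) = ∏ i : Fin n, (X - C (α i))) :
    ∃ P : ℤ,
      (P : ℂ) = ∏ i : Fin n,
        Polynomial.aeval (α i) (C (n : ℤ) * F - X * Polynomial.derivative F) ∧
      P ≡ (n : ℤ) [ZMOD 8] :=
  prod_H_mod_eight_general s n hs hs0 hodd hn α F hF hroots
end
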